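/- Assume A_{∂I}ᵀA_{∂I} is invertible, so F has a unique minimizer x(y). Then P(X_β ∈ {x ∈ ℝ^p : xᵢξᵢ > 0 for all i ∈ ∂I₀}) → 1 as β → +∞; that is, with probability tending to one, every component of X_β indexed by ∂I₀ has the sign of ξᵢ. -/

import Mathlib

open MeasureTheory

lemma aux_opt (x ξ a : ℝ) (ha : 0 ≤ a)
    (h : ∀ τ : ℝ, 0 ≤ |x + τ| - |x| - τ * ξ + τ ^ 2 * a) : |ξ| ≤ 1 ∧ ξ * x = |x| := by
  have h1 : |ξ| ≤ 1 := by
    refine le_of_forall_pos_le_add fun e he => ?_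
    have key : ∀ s : ℝ, |s| = 1 → s * ξ ≤ 1 + e := by
      intro s hs
      have hd : 0 < e / (a + 1) := by positivity
      have := h (e / (a + 1) * s)
      have h2 : |x + e / (a + 1) * s| ≤ |x| + e / (a + 1) := by
        refine (abs_add_le _ _).trans ?_
        rw [abs_mul, hs, abs_of_pos hd, mul_one]
      have hs2 : s ^ 2 = 1 := by rw [← sq_abs, hs]; norm_num
      have h3 : 0 ≤ e / (a + 1) * (1 - s * ξ + e / (a + 1) * a) := by
        have : (e / (a + 1) * s) ^ 2 = (e / (a + 1)) ^ 2 := by rw [mul_pow, hs2, mul_one]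
        nlinarith
      have h4 := nonneg_of_mul_nonneg_right h3 hd
      have h5 : e / (a + 1) * a ≤ e := by
        rw [div_mul_eq_mul_div, div_le_iff₀ (by linarith)]; nlinarith
      linarith
    rw [abs_le]
    constructor
    · have := key (-1) (by simp); linarith
    · have := key 1 (by simp); linarith
  refine ⟨h1, le_antisymm ?_ ?_⟩
  · calc ξ * x ≤ |ξ * x| := le_abs_self _
      _ = |ξ| * |x| := abs_mul _ _
      _ ≤ 1 * |x| := by gcongr
      _ = |x| := one_mul _
  · refine le_of_forall_pos_le_add fun e he => ?_
    set d := e / (x ^ 2 * a + 1 + e) with hd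
    have hxa : 0 ≤ x ^ 2 * a := by positivity
    have hd0 : 0 < d := by positivity
    have hd1 : d ≤ 1 := by
      rw [hd, div_le_one (by positivity)]; linarith
    have hd2 : d * (x ^ 2 * a) ≤ e := by
      rw [hd, div_mul_eq_mul_div, div_le_iff₀ (by positivity)]; nlinarith
    have := h (-d * x)
    have h2 : |x + -d * x| = (1 - d) * |x| := by
      rw [show x + -d * x = (1 - d) * x by ring, abs_mul, abs_of_nonneg (by linarith)]
    rw [h2] at this
    have h3 : 0 ≤ d * (ξ * x + d * (x ^ 2 * a) - |x|) := by nlinarith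
    have := nonneg_of_mul_nonneg_right h3 hd0
    linarith

lemma aux_expand {p n : ℕ} (A : Matrix (Fin n) (Fin p) ℝ) (y : Fin n → ℝ) (F : (Fin p → ℝ) → ℝ)
    (hF : ∀ x, F x = (∑ i, |x i|) + (∑ j, (A.mulVec x j - y j) ^ 2) / 2)
    (x₀ : Fin p → ℝ) (ξ : Fin p → ℝ) (hξ : ξ = A.transpose.mulVec (y - A.mulVec x₀))
    (h : Fin p → ℝ) :
    F (x₀ + h) = F x₀ + (∑ i, (|x₀ i + h i| - |x₀ i| - h i * ξ i)) +
      (∑ j, (A.mulVec h j) ^ 2) / 2 := by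
  have h1 : ∑ i, h i * ξ i = ∑ j, A.mulVec h j * (y j - A.mulVec x₀ j) := by
    have : h ⬝ᵥ ξ = A.mulVec h ⬝ᵥ (y - A.mulVec x₀) := by
      rw [hξ, Matrix.dotProduct_mulVec, Matrix.vecMul_transpose]
    simpa [dotProduct] using this
  rw [hF, hF, Finset.sum_sub_distrib, Finset.sum_sub_distrib, h1, Matrix.mulVec_add]
  have h2 : ∑ j, ((A.mulVec x₀ + A.mulVec h) j - y j) ^ 2 = ∑ j, (A.mulVec x₀ j - y j) ^ 2
      - 2 * ∑ j, A.mulVec h j * (y j - A.mulVec x₀ j) + ∑ j, (A.mulVec h j) ^ 2 := by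
    rw [Finset.mul_sum, ← Finset.sum_sub_distrib, ← Finset.sum_add_distrib]
    refine Finset.sum_congr rfl fun j _ => ?_
    simp only [Pi.add_apply]; ring
  rw [h2]
  simp only [Pi.add_apply]; ring

lemma aux_opt_vec {p n : ℕ} (A : Matrix (Fin n) (Fin p) ℝ) (y : Fin n → ℝ) (F : (Fin p → ℝ) → ℝ)
    (hF : ∀ x, F x = (∑ i, |x i|) + (∑ j, (A.mulVec x j - y j) ^ 2) / 2)
    (x₀ : Fin p → ℝ) (hx₀ : ∀ z, F x₀ ≤ F z)
    (ξ : Fin p → ℝ) (hξ : ξ = A.transpose.mulVec (y - A.mulVec x₀)) (i : Fin p) :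
    |ξ i| ≤ 1 ∧ ξ i * x₀ i = |x₀ i| := by
  refine aux_opt _ _ ((∑ j, (A j i) ^ 2) / 2) (by positivity) fun τ => ?_
  have h := hx₀ (x₀ + Pi.single i τ)
  rw [aux_expand A y F hF x₀ ξ hξ] at h
  have h1 : ∑ k, (|x₀ k + (Pi.single i τ : Fin p → ℝ) k| - |x₀ k| - (Pi.single i τ : Fin p → ℝ) k * ξ k)
      = |x₀ i + τ| - |x₀ i| - τ * ξ i := by
    rw [Finset.sum_eq_single i]
    · simp
    · intro b _ hb; simp [hb]
    · simp
  have h2 : ∑ j, (A.mulVec (Pi.single i τ) j) ^ 2 = τ ^ 2 * ∑ j, (A j i) ^ 2 := by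
    rw [Finset.mul_sum]
    refine Finset.sum_congr rfl fun j _ => ?_
    rw [Matrix.mulVec_single]; simp; ring
  rw [h1, h2] at h
  linarith

lemma aux_G {p n : ℕ} (A : Matrix (Fin n) (Fin p) ℝ) (y : Fin n → ℝ) (F : (Fin p → ℝ) → ℝ)
    (hF : ∀ x, F x = (∑ i, |x i|) + (∑ j, (A.mulVec x j - y j) ^ 2) / 2)
    (x₀ : Fin p → ℝ) (hx₀ : ∀ z, F x₀ ≤ F z)
    (ξ : Fin p → ℝ) (hξ : ξ = A.transpose.mulVec (y - A.mulVec x₀)) (h : Fin p → ℝ) :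
    F (x₀ + h) = F x₀ + (∑ i, (|x₀ i + h i| - ξ i * (x₀ i + h i))) +
      (∑ j, (A.mulVec h j) ^ 2) / 2 := by
  rw [aux_expand A y F hF x₀ ξ hξ]
  congr 2
  refine Finset.sum_congr rfl fun i _ => ?_
  have := (aux_opt_vec A y F hF x₀ hx₀ ξ hξ i).2
  linarith

lemma aux_cov {p : ℕ} (x₀ s : Fin p → ℝ) (hs : ∀ i, s i ≠ 0) :
    ∃ c : ℝ, 0 < c ∧ ∀ f : (Fin p → ℝ) → ℝ,
      ∫ x, f x = c * ∫ u : Fin p → ℝ, f (x₀ + fun i => s i * u i) := by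
  have hdet : (Matrix.diagonal s).det ≠ 0 := by
    rw [Matrix.det_diagonal]; exact Finset.prod_ne_zero_iff.2 fun i _ => hs i
  refine ⟨|(Matrix.diagonal s).det|, abs_pos.2 hdet, fun f => ?_⟩
  have hmap := Real.smul_map_diagonal_volume_pi hdet
  have hlin : (⇑(Matrix.toLin' (Matrix.diagonal s)) : (Fin p → ℝ) → (Fin p → ℝ))
      = fun u i => s i * u i := by
    ext u i; simp [Matrix.mulVec_diagonal]
  have hinj : Function.Injective (Matrix.toLin' (Matrix.diagonal s)) := by
    rw [hlin]; intro u v huv; ext i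
    exact mul_left_cancel₀ (hs i) (congrFun huv i)
  have hemb : MeasurableEmbedding (Matrix.toLin' (Matrix.diagonal s)) := by
    refine (Topology.IsClosedEmbedding.measurableEmbedding ?_)
    exact LinearMap.isClosedEmbedding_of_injective (LinearMap.ker_eq_bot.2 hinj)
  rw [← integral_add_left_eq_self f x₀]
  conv_lhs => rw [← hmap]
  rw [integral_smul_measure, hemb.integral_map, hlin, ENNReal.toReal_ofReal (abs_nonneg _),
    smul_eq_mul]

lemma aux_int {p : ℕ} (c C : ℝ) (hc : 0 < c) :
    Integrable (fun u : Fin p → ℝ => Real.exp (-(c * ∑ i, |u i| - C))) := by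
  have h1 : Integrable (fun x : ℝ => Real.exp (-c * |x|)) := by
    rw [← integrableOn_univ, ← Set.Iic_union_Ioi (a := (0:ℝ))]
    refine IntegrableOn.union ?_ ?_
    · refine (integrableOn_exp_mul_Iic hc 0).congr_fun (fun x hx => ?_) measurableSet_Iic
      simp only [abs_of_nonpos (Set.mem_Iic.1 hx)]; ring_nf
    · refine (integrableOn_exp_mul_Ioi (neg_lt_zero.2 hc) 0).congr_fun (fun x hx => ?_)
        measurableSet_Ioi
      simp only [abs_of_pos (Set.mem_Ioi.1 hx)]
  have h2 : Integrable (fun u : Fin p → ℝ => ∏ i, Real.exp (-c * |u i|)) :=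
    Integrable.fintype_prod (fun _ => h1)
  refine (h2.const_mul (Real.exp C)).congr (Filter.Eventually.of_forall fun u => ?_)
  simp only
  rw [← Real.exp_sum, ← Real.exp_add, ← Finset.mul_sum]
  ring_nf

lemma aux_inj {p n : ℕ} (A : Matrix (Fin n) (Fin p) ℝ) (ξ : Fin p → ℝ)
    (hind : LinearIndependent ℝ
      (fun i : {i : Fin p // |ξ i| = 1} => (fun j => A j i.1 : Fin n → ℝ))) :
    ∃ m : ℝ, 0 < m ∧ ∀ v : Fin p → ℝ, (∀ i, |ξ i| ≠ 1 → v i = 0) →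
      m * ∑ i, |v i| ≤ ‖A.mulVec v‖ := by
  classical
  have hker := hind.fintypeLinearCombination_injective
  obtain ⟨K, hK, hL⟩ := LinearMap.exists_antilipschitzWith _ (LinearMap.ker_eq_bot.2 hker)
  refine ⟨((p + 1 : ℝ) * K)⁻¹, by positivity, fun v hv => ?_⟩
  have h1 := hL.le_mul_dist (fun i => v i.1) 0
  rw [map_zero, dist_zero_right, dist_zero_right] at h1
  have h2 : Fintype.linearCombination ℝ
      (fun i : {i : Fin p // |ξ i| = 1} => (fun j => A j i.1 : Fin n → ℝ)) (fun i => v i.1)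
      = A.mulVec v := by
    ext j
    rw [Fintype.linearCombination_apply, Finset.sum_apply]
    simp only [Matrix.mulVec, dotProduct, Pi.smul_apply, smul_eq_mul]
    rw [← Fintype.sum_subtype_add_sum_subtype (fun i => |ξ i| = 1) (fun i => A j i * v i)]
    have h0 : ∑ i : {i // ¬ |ξ i| = 1}, A j i.1 * v i.1 = 0 :=
      Finset.sum_eq_zero fun i _ => by rw [hv i.1 i.2, mul_zero]
    rw [h0, add_zero]
    exact Finset.sum_congr rfl fun i _ => mul_comm _ _
  rw [h2] at h1
  have h3 : ∑ i, |v i| ≤ p * (K * ‖A.mulVec v‖) := by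
    calc ∑ i, |v i| ≤ ∑ i : Fin p, K * ‖A.mulVec v‖ := by
          refine Finset.sum_le_sum fun i _ => ?_
          by_cases hi : |ξ i| = 1
          · exact (norm_le_pi_norm (fun i : {i : Fin p // |ξ i| = 1} => v i.1) ⟨i, hi⟩).trans h1
          · rw [hv i hi]; simp; positivity
      _ = _ := by simp
  rw [inv_mul_le_iff₀ (by positivity)]
  have : 0 ≤ K * ‖A.mulVec v‖ := by positivity
  nlinarith

/-- The coordinate scales. -/
noncomputable def auxS {p : ℕ} (ξ : Fin p → ℝ) (t : ℝ) (i : Fin p) : ℝ :=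
  open Classical in if |ξ i| = 1 then 1 / t else 1 / t ^ 2

/-- The rescaled vector. -/
noncomputable def auxW {p : ℕ} (ξ : Fin p → ℝ) (t : ℝ) (u : Fin p → ℝ) (i : Fin p) : ℝ :=
  open Classical in if |ξ i| = 1 then u i else u i * (1 / t)

/-- The rescaled energy. -/
noncomputable def auxE {p n : ℕ} (A : Matrix (Fin n) (Fin p) ℝ) (x₀ ξ : Fin p → ℝ) (t : ℝ)
    (u : Fin p → ℝ) : ℝ :=
  2 * (∑ i, t ^ 2 * (|x₀ i + auxS ξ t i * u i| - ξ i * (x₀ i + auxS ξ t i * u i))) +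
    ∑ j, (A.mulVec (auxW ξ t u) j) ^ 2

lemma aux_scale {p : ℕ} (ξ : Fin p → ℝ) (t : ℝ) (ht : 0 < t) (u : Fin p → ℝ) :
    auxW ξ t u = t • (fun i => auxS ξ t i * u i) := by
  ext i
  simp only [auxW, auxS, Pi.smul_apply, smul_eq_mul]
  split_ifs <;> field_simp

lemma auxS_pos {p : ℕ} (ξ : Fin p → ℝ) (t : ℝ) (ht : 0 < t) (i : Fin p) : 0 < auxS ξ t i := by
  unfold auxS; split_ifs <;> positivity

lemma aux_term_nonneg (a x t : ℝ) (ha : |a| ≤ 1) : 0 ≤ t ^ 2 * (|x| - a * x) := by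
  have : a * x ≤ |x| := by
    calc a * x ≤ |a * x| := le_abs_self _
      _ = |a| * |x| := abs_mul _ _
      _ ≤ 1 * |x| := by gcongr
      _ = |x| := one_mul _
  have : 0 ≤ |x| - a * x := by linarith
  positivity

lemma aux_sq_le {n : ℕ} (w : Fin n → ℝ) : ‖w‖ ^ 2 ≤ ∑ j, (w j) ^ 2 := by
  have h0 : 0 ≤ ∑ j, (w j) ^ 2 := Finset.sum_nonneg fun _ _ => sq_nonneg _
  have : ‖w‖ ≤ √(∑ j, (w j) ^ 2) := by
    refine (pi_norm_le_iff_of_nonneg (Real.sqrt_nonneg _)).2 fun j => ?_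
    rw [Real.norm_eq_abs]
    refine Real.abs_le_sqrt ?_
    exact Finset.single_le_sum (f := fun j => (w j) ^ 2) (fun _ _ => sq_nonneg _)
      (Finset.mem_univ j)
  calc ‖w‖ ^ 2 ≤ (√(∑ j, (w j) ^ 2)) ^ 2 := by gcongr
    _ = _ := Real.sq_sqrt h0

lemma aux_lower {p n : ℕ} (A : Matrix (Fin n) (Fin p) ℝ) (x₀ ξ : Fin p → ℝ)
    (h1 : ∀ i, |ξ i| ≤ 1) (h2 : ∀ i, |ξ i| ≠ 1 → x₀ i = 0)
    (hind : LinearIndependent ℝ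
      (fun i : {i : Fin p // |ξ i| = 1} => (fun j => A j i.1 : Fin n → ℝ))) :
    ∃ c C : ℝ, 0 < c ∧ ∀ t : ℝ, 1 ≤ t → ∀ u, c * ∑ i, |u i| - C ≤ auxE A x₀ ξ t u := by
  classical
  obtain ⟨m, hm, hmv⟩ := aux_inj A ξ hind
  obtain ⟨c0, hc0, hc0i⟩ : ∃ c0 : ℝ, 0 < c0 ∧ ∀ i, |ξ i| ≠ 1 → c0 ≤ 1 - |ξ i| := by
    have := Filter.eventually_all.2 (fun i : Fin p => show ∀ᶠ c0 : ℝ in nhdsWithin 0 (Set.Ioi 0),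
        (|ξ i| ≠ 1 → c0 ≤ 1 - |ξ i|) by
      by_cases hi : |ξ i| = 1
      · simp [hi]
      · have : 0 < 1 - |ξ i| := by
          have := lt_of_le_of_ne (h1 i) hi; linarith
        filter_upwards [Ioc_mem_nhdsGT this] with c hc _ using hc.2)
    obtain ⟨c0, h, h'⟩ := (this.and self_mem_nhdsWithin).exists
    exact ⟨c0, h', h⟩
  obtain ⟨K, hK, hKz⟩ : ∃ K : ℝ, 0 ≤ K ∧ ∀ z : Fin p → ℝ, ‖A.mulVec z‖ ≤ K * ∑ i, |z i| := by
    refine ⟨‖A.mulVecLin.toContinuousLinearMap‖, norm_nonneg _, fun z => ?_⟩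
    refine (A.mulVecLin.toContinuousLinearMap.le_opNorm z).trans ?_
    gcongr
    refine (pi_norm_le_iff_of_nonneg (Finset.sum_nonneg fun _ _ => abs_nonneg _)).2 fun j => ?_
    exact Finset.single_le_sum (f := fun j => |z j|) (fun _ _ => abs_nonneg _)
      (Finset.mem_univ j)
  set δ := c0 / (2 * (K + 1)) with hδ
  have hδ0 : 0 < δ := by positivity
  have hδK : 2 * δ * K ≤ c0 := by
    have : 2 * δ * (K + 1) = c0 := by rw [hδ]; field_simp
    nlinarith
  refine ⟨min c0 (2 * δ * m), δ ^ 2, by positivity, fun t ht u => ?_⟩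
  have ht0 : 0 < t := by linarith
  set v : Fin p → ℝ := fun i => if |ξ i| = 1 then u i else 0 with hv
  set z : Fin p → ℝ := fun i => if |ξ i| = 1 then 0 else u i * (1 / t) with hz
  set r : Fin p → ℝ := fun i => if |ξ i| = 1 then 0 else u i with hr
  have hW : auxW ξ t u = v + z := by
    ext i; simp only [auxW, hv, hz, Pi.add_apply]; split_ifs <;> simp
  have hvb := hmv v (fun i hi => by simp [hv, hi])
  have hzr : ∑ i, |z i| ≤ ∑ i, |r i| := by
    refine Finset.sum_le_sum fun i _ => ?_
    simp only [hz, hr]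
    split_ifs
    · simp
    · rw [abs_mul, abs_of_pos (by positivity : 0 < 1 / t)]
      have : 1 / t ≤ 1 := by rw [div_le_one ht0]; exact ht
      nlinarith [abs_nonneg (u i)]
  have hzb := hKz z
  have hN : ‖A.mulVec v‖ - ‖A.mulVec z‖ ≤ ‖A.mulVec (auxW ξ t u)‖ := by
    rw [hW, Matrix.mulVec_add]
    have := norm_sub_le (A.mulVec v + A.mulVec z) (A.mulVec z)
    rw [add_sub_cancel_right] at this
    linarith
  have hQ := aux_sq_le (A.mulVec (auxW ξ t u))
  have hT : c0 * ∑ i, |r i| ≤ ∑ i, t ^ 2 * (|x₀ i + auxS ξ t i * u i| -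
      ξ i * (x₀ i + auxS ξ t i * u i)) := by
    rw [Finset.mul_sum]
    refine Finset.sum_le_sum fun i _ => ?_
    by_cases hi : |ξ i| = 1
    · simp only [hr, hi, if_true, abs_zero, mul_zero]
      exact aux_term_nonneg _ _ _ (h1 i)
    · simp only [hr, hi, if_false, h2 i hi, zero_add, auxS]
      rw [abs_mul, abs_of_pos (by positivity : 0 < 1 / t ^ 2)]
      have e : t ^ 2 * (1 / t ^ 2 * |u i| - ξ i * (1 / t ^ 2 * u i)) = |u i| - ξ i * u i := by
        field_simp
      rw [e]
      have h3 : ξ i * u i ≤ |ξ i| * |u i| := by rw [← abs_mul]; exact le_abs_self _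
      nlinarith [hc0i i hi, abs_nonneg (u i)]
  have hsum : ∑ i, |u i| = ∑ i, |v i| + ∑ i, |r i| := by
    rw [← Finset.sum_add_distrib]
    refine Finset.sum_congr rfl fun i _ => ?_
    simp only [hv, hr]; split_ifs <;> simp
  have hr0 : 0 ≤ ∑ i, |r i| := Finset.sum_nonneg fun _ _ => abs_nonneg _
  have hv0 : 0 ≤ ∑ i, |v i| := Finset.sum_nonneg fun _ _ => abs_nonneg _
  unfold auxE
  rw [hsum]
  have k1 : min c0 (2 * δ * m) * ∑ i, |v i| ≤ 2 * δ * m * ∑ i, |v i| := by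
    gcongr; exact min_le_right _ _
  have k2 : min c0 (2 * δ * m) * ∑ i, |r i| ≤ c0 * ∑ i, |r i| := by
    gcongr; exact min_le_left _ _
  have k3 : 2 * δ * ‖A.mulVec (auxW ξ t u)‖ - δ ^ 2 ≤ ‖A.mulVec (auxW ξ t u)‖ ^ 2 := by
    nlinarith [sq_nonneg (‖A.mulVec (auxW ξ t u)‖ - δ)]
  have k4 : 2 * δ * (m * ∑ i, |v i| - K * ∑ i, |r i|) ≤ 2 * δ * ‖A.mulVec (auxW ξ t u)‖ := by
    have : K * ∑ i, |z i| ≤ K * ∑ i, |r i| := by gcongr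
    gcongr; linarith
  have k5 : 2 * δ * K * ∑ i, |r i| ≤ c0 * ∑ i, |r i| := by gcongr
  linarith

/-- The good set. -/
def auxGood {p : ℕ} (x₀ ξ : Fin p → ℝ) : Set (Fin p → ℝ) :=
  {x | ∀ i, x₀ i = 0 ∧ |ξ i| = 1 → 0 < x i * ξ i}

/-- The limiting density. -/
noncomputable def auxLim {p n : ℕ} (A : Matrix (Fin n) (Fin p) ℝ) (x₀ ξ : Fin p → ℝ) :
    (Fin p → ℝ) → ℝ :=
  open Classical in (auxGood x₀ ξ).indicator fun u =>
    Real.exp (-(2 * (∑ i, if |ξ i| = 1 then 0 else (|u i| - ξ i * u i)) +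
      ∑ j, (A.mulVec (fun i => if |ξ i| = 1 then u i else 0) j) ^ 2))

lemma aux_tendsto_good {p n : ℕ} (A : Matrix (Fin n) (Fin p) ℝ) (x₀ ξ : Fin p → ℝ)
    (h1 : ∀ i, ξ i * x₀ i = |x₀ i|) (h2 : ∀ i, |ξ i| ≠ 1 → x₀ i = 0)
    (u : Fin p → ℝ) (hu : u ∈ auxGood x₀ ξ) :
    Filter.Tendsto (fun t => Real.exp (-auxE A x₀ ξ t u)) Filter.atTop
      (nhds (auxLim A x₀ ξ u)) := by
  classical
  rw [auxLim, Set.indicator_of_mem hu]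
  refine (Real.continuous_exp.tendsto _).comp (Filter.Tendsto.neg ?_)
  refine Filter.Tendsto.add (Filter.Tendsto.const_mul _ (tendsto_finsetSum _ fun i _ => ?_)) ?_
  · refine Filter.Tendsto.congr' ?_ tendsto_const_nhds
    by_cases hi : |ξ i| = 1
    · have hξ2 : ξ i * ξ i = 1 := by rw [← abs_mul_abs_self, hi]; norm_num
      have habs : ∀ x : ℝ, 0 ≤ x * ξ i → |x| = ξ i * x := by
        intro x hx
        calc |x| = |x| * |ξ i| := by rw [hi, mul_one]
          _ = |x * ξ i| := (abs_mul _ _).symm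
          _ = _ := by rw [abs_of_nonneg hx, mul_comm]
      have key : ∀ᶠ t : ℝ in Filter.atTop, 0 ≤ (x₀ i + 1 / t * u i) * ξ i := by
        by_cases hx : x₀ i = 0
        · filter_upwards [Filter.eventually_gt_atTop 0] with t ht
          have := hu i ⟨hx, hi⟩
          rw [hx, zero_add, mul_assoc]; positivity
        · have ht : Filter.Tendsto (fun t : ℝ => (x₀ i + 1 / t * u i) * ξ i) Filter.atTop
              (nhds ((x₀ i + 0 * u i) * ξ i)) := by
            refine Filter.Tendsto.mul_const _ (Filter.Tendsto.const_add _
              (Filter.Tendsto.mul_const _ ?_))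
            exact tendsto_const_nhds.div_atTop Filter.tendsto_id
          have hp : 0 < (x₀ i + 0 * u i) * ξ i := by
            rw [zero_mul, add_zero, mul_comm, h1]; exact abs_pos.2 hx
          filter_upwards [ht.eventually (lt_mem_nhds hp)] with t ht using ht.le
      filter_upwards [key] with t ht
      simp only [auxS, hi, if_true]
      rw [habs _ ht]; ring
    · filter_upwards [Filter.eventually_gt_atTop 0] with t ht
      simp only [auxS, hi, if_false, h2 i hi, zero_add]
      rw [abs_mul, abs_of_pos (by positivity : 0 < 1 / t ^ 2)]
      field_simp
  · have hw : Filter.Tendsto (fun t => auxW ξ t u) Filter.atTop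
        (nhds (fun i => if |ξ i| = 1 then u i else 0)) := by
      refine tendsto_pi_nhds.2 fun i => ?_
      simp only [auxW]
      split_ifs
      · exact tendsto_const_nhds
      · have : Filter.Tendsto (fun t : ℝ => u i * (1 / t)) Filter.atTop (nhds (u i * 0)) := by
          refine Filter.Tendsto.const_mul _ ?_
          exact tendsto_const_nhds.div_atTop Filter.tendsto_id
        simpa using this
    have hc : Continuous fun w : Fin p → ℝ => ∑ j, (A.mulVec w j) ^ 2 := by
      have : Continuous fun w : Fin p → ℝ => A.mulVec w := by fun_prop
      fun_prop
    exact (hc.tendsto _).comp hw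

lemma aux_tendsto_bad {p n : ℕ} (A : Matrix (Fin n) (Fin p) ℝ) (x₀ ξ : Fin p → ℝ)
    (h1 : ∀ i, |ξ i| ≤ 1)
    (u : Fin p → ℝ) (hu0 : ∀ i, u i ≠ 0) (hu : u ∉ auxGood x₀ ξ) :
    Filter.Tendsto (fun t => Real.exp (-auxE A x₀ ξ t u)) Filter.atTop
      (nhds (auxLim A x₀ ξ u)) := by
  rw [auxLim, Set.indicator_of_notMem hu]
  refine Real.tendsto_exp_neg_atTop_nhds_zero.comp ?_
  simp only [auxGood, Set.mem_ofPred_eq, not_forall, not_lt] at hu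
  obtain ⟨i, ⟨hx, hi⟩, hle⟩ := hu
  have hpos : 0 < |u i| := abs_pos.2 (hu0 i)
  refine Filter.tendsto_atTop_mono' _ ?_ (Filter.tendsto_id.const_mul_atTop hpos)
  filter_upwards [Filter.eventually_gt_atTop 0] with t ht
  have hQ : 0 ≤ ∑ j, (A.mulVec (auxW ξ t u) j) ^ 2 := Finset.sum_nonneg fun _ _ => sq_nonneg _
  have hS := Finset.single_le_sum (f := fun i => t ^ 2 * (|x₀ i + auxS ξ t i * u i| -
      ξ i * (x₀ i + auxS ξ t i * u i))) (fun i _ => aux_term_nonneg _ _ _ (h1 i))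
      (Finset.mem_univ i)
  have e : t ^ 2 * (|x₀ i + auxS ξ t i * u i| - ξ i * (x₀ i + auxS ξ t i * u i))
      = t * |u i| - t * (u i * ξ i) := by
    simp only [auxS, hi, if_true, hx, zero_add]
    rw [abs_mul, abs_of_pos (by positivity : 0 < 1 / t)]
    field_simp
  simp only [e] at hS
  unfold auxE
  simp only [id]
  have := mul_nonneg ht.le (neg_nonneg.2 hle)
  have := mul_pos ht hpos
  nlinarith

lemma aux_good_open {p : ℕ} (x₀ ξ : Fin p → ℝ) : IsOpen (auxGood x₀ ξ) := by
  have : auxGood x₀ ξ = ⋂ i, {x : Fin p → ℝ | x₀ i = 0 ∧ |ξ i| = 1 → 0 < x i * ξ i} := by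
    ext; simp [auxGood]
  rw [this]
  refine isOpen_iInter_of_finite fun i => ?_
  by_cases h : x₀ i = 0 ∧ |ξ i| = 1
  · simp only [h, true_imp_iff, and_self]
    exact isOpen_lt continuous_const (by fun_prop)
  · simp [h]

lemma aux_cont {p n : ℕ} (A : Matrix (Fin n) (Fin p) ℝ) (x₀ ξ : Fin p → ℝ) (t : ℝ) :
    Continuous fun u => Real.exp (-auxE A x₀ ξ t u) := by
  have hw : Continuous fun u => auxW ξ t u := by
    refine continuous_pi fun i => ?_
    unfold auxW; split_ifs <;> fun_prop
  have : Continuous fun u => A.mulVec (auxW ξ t u) := by fun_prop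
  unfold auxE
  fun_prop

lemma aux_ae {p : ℕ} : ∀ᵐ u : Fin p → ℝ, ∀ i, u i ≠ 0 := by
  rw [ae_all_iff]
  intro i
  exact Measure.ae_eval_ne (fun _ : Fin p => (volume : Measure ℝ)) i 0

lemma aux_energy {p n : ℕ} (A : Matrix (Fin n) (Fin p) ℝ) (y : Fin n → ℝ) (F : (Fin p → ℝ) → ℝ)
    (hF : ∀ x, F x = (∑ i, |x i|) + (∑ j, (A.mulVec x j - y j) ^ 2) / 2)
    (x₀ : Fin p → ℝ) (hx₀ : ∀ z, F x₀ ≤ F z)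
    (ξ : Fin p → ℝ) (hξ : ξ = A.transpose.mulVec (y - A.mulVec x₀)) (t : ℝ) (ht : 0 < t)
    (u : Fin p → ℝ) :
    2 * t ^ 2 * F (x₀ + fun i => auxS ξ t i * u i) = 2 * t ^ 2 * F x₀ + auxE A x₀ ξ t u := by
  rw [aux_G A y F hF x₀ hx₀ ξ hξ, auxE, aux_scale ξ t ht, Matrix.mulVec_smul, ← Finset.mul_sum]
  simp only [Pi.smul_apply, smul_eq_mul, mul_pow]
  rw [← Finset.mul_sum]
  ring

open Filter in
theorem posterior_signs_match (p n : ℕ) (A : Matrix (Fin n) (Fin p) ℝ)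
    (y : Fin n → ℝ) (F : (Fin p → ℝ) → ℝ)
    (hF : ∀ x, F x = (∑ i, |x i|) + (∑ j, (A.mulVec x j - y j) ^ 2) / 2)
    (x₀ : Fin p → ℝ) (hx₀ : ∀ z, F x₀ ≤ F z)
    (ξ : Fin p → ℝ) (hξ : ξ = A.transpose.mulVec (y - A.mulVec x₀))
    (hind : LinearIndependent ℝ
      (fun i : {i : Fin p // |ξ i| = 1} => (fun j => A j i.1 : Fin n → ℝ))) :
    Filter.Tendsto (fun β : ℝ =>
        (∫ x in {x : Fin p → ℝ |
            ∀ i, x₀ i = 0 ∧ |ξ i| = 1 → 0 < x i * ξ i},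
          Real.exp (-2 * β * F x)) /
        (∫ x : Fin p → ℝ, Real.exp (-2 * β * F x)))
      Filter.atTop (nhds 1) := by
  classical
  have hopt := aux_opt_vec A y F hF x₀ hx₀ ξ hξ
  have h1 : ∀ i, |ξ i| ≤ 1 := fun i => (hopt i).1
  have h3 : ∀ i, ξ i * x₀ i = |x₀ i| := fun i => (hopt i).2
  have h2 : ∀ i, |ξ i| ≠ 1 → x₀ i = 0 := by
    intro i hi
    by_contra hx
    apply hi
    have := congrArg abs (h3 i)
    rw [abs_mul, abs_abs] at this
    exact mul_right_cancel₀ (abs_ne_zero.2 hx) (this.trans (one_mul _).symm)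
  obtain ⟨c, C, hc, hlow⟩ := aux_lower A x₀ ξ h1 h2 hind
  have hbd := aux_int (p := p) c C hc
  have hmeas := (aux_good_open x₀ ξ).measurableSet
  have hlim : ∀ᵐ u : Fin p → ℝ, Tendsto (fun t => Real.exp (-auxE A x₀ ξ t u)) atTop
      (nhds (auxLim A x₀ ξ u)) := by
    filter_upwards [aux_ae] with u hu0
    by_cases hu : u ∈ auxGood x₀ ξ
    · exact aux_tendsto_good A x₀ ξ h3 h2 u hu
    · exact aux_tendsto_bad A x₀ ξ h1 u hu0 hu
  have hbound : ∀ t : ℝ, 1 ≤ t → ∀ u,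
      ‖Real.exp (-auxE A x₀ ξ t u)‖ ≤ Real.exp (-(c * ∑ i, |u i| - C)) := by
    intro t ht u
    rw [Real.norm_eq_abs, Real.abs_exp]
    exact Real.exp_le_exp.2 (neg_le_neg (hlow t ht u))
  have hden : Tendsto (fun t => ∫ u, Real.exp (-auxE A x₀ ξ t u)) atTop
      (nhds (∫ u, auxLim A x₀ ξ u)) := by
    refine tendsto_integral_filter_of_dominated_convergence _ ?_ ?_ hbd hlim
    · exact Eventually.of_forall fun t => (aux_cont A x₀ ξ t).aestronglyMeasurable
    · filter_upwards [eventually_ge_atTop 1] with t ht using Eventually.of_forall (hbound t ht)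
  have hnum : Tendsto (fun t => ∫ u, (auxGood x₀ ξ).indicator
      (fun u => Real.exp (-auxE A x₀ ξ t u)) u) atTop (nhds (∫ u, auxLim A x₀ ξ u)) := by
    refine tendsto_integral_filter_of_dominated_convergence _ ?_ ?_ hbd ?_
    · exact Eventually.of_forall fun t =>
        (aux_cont A x₀ ξ t).aestronglyMeasurable.indicator hmeas
    · filter_upwards [eventually_ge_atTop 1] with t ht using Eventually.of_forall fun u =>
        (norm_indicator_le_norm_self _ _).trans (hbound t ht u)
    · filter_upwards [hlim] with u hu
      by_cases hg : u ∈ auxGood x₀ ξ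
      · simpa only [Set.indicator_of_mem hg] using hu
      · simp only [Set.indicator_of_notMem hg, auxLim]
        exact tendsto_const_nhds
  have hL : 0 < ∫ u, auxLim A x₀ ξ u := by
    have hnn : 0 ≤ auxLim A x₀ ξ := by
      intro u; unfold auxLim
      exact Set.indicator_nonneg (fun _ _ => (Real.exp_pos _).le) _
    have hint : Integrable (auxLim A x₀ ξ) := by
      refine hbd.mono' ?_ ?_
      · exact aestronglyMeasurable_of_tendsto_ae atTop
          (fun t => (aux_cont A x₀ ξ t).aestronglyMeasurable) hlim
      · filter_upwards [hlim] with u hu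
        refine le_of_tendsto hu.norm ?_
        filter_upwards [eventually_ge_atTop 1] with t ht using hbound t ht u
    rw [integral_pos_iff_support_of_nonneg hnn hint]
    have hsupp : auxGood x₀ ξ ⊆ Function.support (auxLim A x₀ ξ) := by
      intro u hu
      rw [Function.mem_support, auxLim, Set.indicator_of_mem hu]
      exact (Real.exp_pos _).ne'
    refine lt_of_lt_of_le ?_ (measure_mono hsupp)
    refine (aux_good_open x₀ ξ).measure_pos _ ⟨ξ, fun i hi => ?_⟩
    rw [← abs_mul_abs_self, hi.2]; norm_num
  have hratio := (hnum.div hden hL.ne').comp Real.tendsto_sqrt_atTop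
  rw [div_self hL.ne'] at hratio
  refine hratio.congr' ?_
  filter_upwards [eventually_gt_atTop 0] with β hβ
  have ht : 0 < √β := Real.sqrt_pos.2 hβ
  obtain ⟨k, hk, hcov⟩ := aux_cov x₀ (auxS ξ √β) fun i => (auxS_pos ξ _ ht i).ne'
  have hexp : ∀ u : Fin p → ℝ, Real.exp (-2 * β * F (x₀ + fun i => auxS ξ √β i * u i))
      = Real.exp (-2 * β * F x₀) * Real.exp (-auxE A x₀ ξ √β u) := by
    intro u
    have := aux_energy A y F hF x₀ hx₀ ξ hξ √β ht u
    rw [Real.sq_sqrt hβ.le] at this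
    rw [← Real.exp_add]
    congr 1
    linarith
  have hmem : ∀ u : Fin p → ℝ, (x₀ + fun i => auxS ξ √β i * u i) ∈ auxGood x₀ ξ ↔
      u ∈ auxGood x₀ ξ := by
    intro u
    refine forall_congr' fun i => imp_congr_right fun hi => ?_
    simp only [Pi.add_apply, hi.1, zero_add, mul_assoc]
    exact mul_pos_iff_of_pos_left (auxS_pos ξ _ ht i)
  have e1 : ∫ x in {x : Fin p → ℝ | ∀ i, x₀ i = 0 ∧ |ξ i| = 1 → 0 < x i * ξ i},
      Real.exp (-2 * β * F x) = k * (Real.exp (-2 * β * F x₀) * ∫ u, (auxGood x₀ ξ).indicator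
      (fun u => Real.exp (-auxE A x₀ ξ √β u)) u) := by
    change ∫ x in auxGood x₀ ξ, Real.exp (-2 * β * F x) = _
    rw [← integral_indicator hmeas, hcov, ← integral_const_mul (Real.exp (-2 * β * F x₀))]
    congr 2
    funext u
    by_cases hg : u ∈ auxGood x₀ ξ
    · rw [Set.indicator_of_mem hg, Set.indicator_of_mem ((hmem u).2 hg), hexp]
    · rw [Set.indicator_of_notMem hg, Set.indicator_of_notMem (fun h => hg ((hmem u).1 h)),
        mul_zero]
  have e2 : ∫ x : Fin p → ℝ, Real.exp (-2 * β * F x) =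
      k * (Real.exp (-2 * β * F x₀) * ∫ u, Real.exp (-auxE A x₀ ξ √β u)) := by
    rw [hcov, ← integral_const_mul (Real.exp (-2 * β * F x₀))]
    simp only [hexp]
  rw [e1, e2, mul_div_mul_left _ _ hk.ne', mul_div_mul_left _ _ (Real.exp_pos _).ne']
  rfl
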